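/- arXiv:2512.09295 — 5 statements merged into one kernel-verified Lean document; each statement's English description precedes it below -/
import Mathlib

section
/- Let X be a real random variable, Z a standard Gaussian independent of X, σ > 0, and Y = X + σZ. Let h : ℝ → ℝ be continuously differentiable with E[h(Y)²] < ∞, E[|h'(Y)|] < ∞, and such that h(x+σz)·e^{-z²/2} → 0 as |z| → ∞ for each x (so that Gaussian integration by parts is valid). Then E[(Y + h(Y) − X)²] = σ² + E[h(Y)² + 2σ² h'(Y)]. -/
open MeasureTheory ProbabilityTheory Filter

/-!
Put `W = σ Z`, so that `Y - X = W`. Expanding the square leaves the cross term `2 E[W h(X + W)]`,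
which Stein's lemma, applied to `w ↦ h (x + w)` for almost every value `x` of `X`, turns into
`2 σ² E[h'(X + W)]`.

The integration by parts behind Stein's lemma has no boundary term: the product of the function
with the Gaussian density is integrable and has an integrable derivative, so it vanishes at
infinity.
-/

open scoped NNReal

section SteinLemma

lemma hasDerivAt_gaussianPDFReal (m : ℝ) (v : ℝ≥0) (x : ℝ) :
    HasDerivAt (gaussianPDFReal m v) (-((x - m) / v) * gaussianPDFReal m v x) x := by
  have hexponent : HasDerivAt (fun y : ℝ ↦ -(y - m) ^ 2 / (2 * v)) (-((x - m) / v)) x := by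
    refine ((((hasDerivAt_id x).sub_const m).pow 2).neg.div_const (2 * (v : ℝ))).congr_deriv ?_
    simp only [Nat.cast_ofNat, id_eq, Nat.add_one_sub_one, pow_one, mul_one]
    ring
  refine (hexponent.exp.const_mul (√(2 * Real.pi * v))⁻¹).congr_deriv ?_
  rw [gaussianPDFReal_def]
  ring

variable {E : Type*} [NormedAddCommGroup E] [NormedSpace ℝ E] {m : ℝ} {v : ℝ≥0}

lemma integrable_gaussianReal_iff (hv : v ≠ 0) {f : ℝ → E} :
    Integrable f (gaussianReal m v) ↔ Integrable (fun x ↦ gaussianPDFReal m v x • f x) := by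
  rw [gaussianReal_of_var_ne_zero m hv, integrable_withDensity_iff_integrable_smul'
    (measurable_gaussianPDF m v) (ae_of_all _ fun _ ↦ gaussianPDF_lt_top)]
  simp only [toReal_gaussianPDF]

lemma integrable_of_integrable_sub_smul {μ : Measure ℝ} [IsFiniteMeasureOnCompacts μ] {f : ℝ → E}
    (hf : Continuous f) (hint : Integrable (fun x ↦ (x - m) • f x) μ) : Integrable f μ := by
  have hball : IntegrableOn f (Metric.closedBall m 1) μ :=
    hf.continuousOn.integrableOn_compact (isCompact_closedBall m 1)
  have hcompl : IntegrableOn f (Metric.closedBall m 1)ᶜ μ := by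
    refine Integrable.mono hint.integrableOn hf.aestronglyMeasurable ?_
    refine ae_restrict_of_forall_mem Metric.isClosed_closedBall.measurableSet.compl fun x hx ↦ ?_
    have hfar : 1 ≤ ‖x - m‖ := by
      rw [← dist_eq_norm]
      exact (not_le.1 (mt Metric.mem_closedBall.2 hx)).le
    rw [norm_smul]
    exact le_mul_of_one_le_left (norm_nonneg _) hfar
  rw [← integrableOn_univ, ← Set.union_compl_self (Metric.closedBall m 1)]
  exact hball.union hcompl

lemma integral_sub_smul_gaussianReal {f f' : ℝ → E} (hf : ∀ x, HasDerivAt f (f' x) x)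
    (hint : Integrable (fun x ↦ (x - m) • f x) (gaussianReal m v))
    (hint' : Integrable f' (gaussianReal m v)) :
    ∫ x, (x - m) • f x ∂gaussianReal m v = (v : ℝ) • ∫ x, f' x ∂gaussianReal m v := by
  obtain rfl | hv := eq_or_ne v 0
  · have hzero : ∀ᵐ x ∂gaussianReal m 0, (x - m) • f x = 0 := by simp [ae_dirac_eq]
    rw [integral_eq_zero_of_ae hzero, NNReal.coe_zero, zero_smul]
  have hf_int : Integrable f (gaussianReal m v) :=
    integrable_of_integrable_sub_smul
      (continuous_iff_continuousAt.2 fun x ↦ (hf x).continuousAt) hint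
  have hderiv (x : ℝ) : HasDerivAt (fun y ↦ gaussianPDFReal m v y • f y)
      (gaussianPDFReal m v x • f' x - (v : ℝ)⁻¹ • gaussianPDFReal m v x • (x - m) • f x) x := by
    refine ((hasDerivAt_gaussianPDFReal m v x).smul (hf x)).congr_deriv ?_
    module
  rw [integrable_gaussianReal_iff hv] at hint hint' hf_int
  have hint_smul : Integrable (fun x ↦ (v : ℝ)⁻¹ • gaussianPDFReal m v x • (x - m) • f x) :=
    hint.smul (v : ℝ)⁻¹
  have hparts := integral_eq_zero_of_hasDerivAt_of_integrable hderiv (hint'.sub hint_smul) hf_int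
  rw [integral_sub hint' hint_smul, integral_smul, sub_eq_zero] at hparts
  rw [integral_gaussianReal_eq_integral_smul hv, integral_gaussianReal_eq_integral_smul hv, hparts,
    smul_inv_smul₀ (NNReal.coe_ne_zero.2 hv)]

lemma integral_sub_smul_prod_gaussianReal {𝓧 : Type*} [MeasurableSpace 𝓧] {μ : Measure 𝓧}
    [SFinite μ] {g g' : 𝓧 → ℝ → E} (hg : ∀ x w, HasDerivAt (g x) (g' x w) w)
    (hint : Integrable (fun p : 𝓧 × ℝ ↦ (p.2 - m) • g p.1 p.2) (μ.prod (gaussianReal m v)))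
    (hint' : Integrable (fun p : 𝓧 × ℝ ↦ g' p.1 p.2) (μ.prod (gaussianReal m v))) :
    ∫ p, (p.2 - m) • g p.1 p.2 ∂μ.prod (gaussianReal m v)
      = (v : ℝ) • ∫ p, g' p.1 p.2 ∂μ.prod (gaussianReal m v) := by
  rw [integral_prod _ hint, integral_prod _ hint', ← integral_smul]
  refine integral_congr_ae ?_
  filter_upwards [hint.prod_right_ae, hint'.prod_right_ae] with x hx hx'
  exact integral_sub_smul_gaussianReal (hg x) hx hx'

end SteinLemma

section GaussianNoise

variable {Ω : Type*} {mΩ : MeasurableSpace Ω} {P : Measure Ω}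

lemma integral_sub_mul_comp_add_of_indepFun {X W : Ω → ℝ} {m : ℝ} {v : ℝ≥0}
    (hX : AEMeasurable X P) (hW : HasLaw W (gaussianReal m v) P) (hXW : IndepFun X W P)
    {h : ℝ → ℝ} (hh : Differentiable ℝ h)
    (hint : Integrable (fun ω ↦ (W ω - m) * h (X ω + W ω)) P)
    (hint' : Integrable (fun ω ↦ deriv h (X ω + W ω)) P) :
    ∫ ω, (W ω - m) * h (X ω + W ω) ∂P = v * ∫ ω, deriv h (X ω + W ω) ∂P := by
  have : IsProbabilityMeasure P := hW.isProbabilityMeasure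
  have hh_meas : Measurable h := hh.continuous.measurable
  have hh'_meas : Measurable (deriv h) := measurable_deriv h
  have hlaw : HasLaw (fun ω ↦ (X ω, W ω)) ((P.map X).prod (gaussianReal m v)) P :=
    hXW.hasLaw_prod ⟨hX, rfl⟩ hW
  have hmeas : AEStronglyMeasurable (fun p : ℝ × ℝ ↦ (p.2 - m) * h (p.1 + p.2))
      ((P.map X).prod (gaussianReal m v)) := by fun_prop
  have hmeas' : AEStronglyMeasurable (fun p : ℝ × ℝ ↦ deriv h (p.1 + p.2))
      ((P.map X).prod (gaussianReal m v)) :=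
    (hh'_meas.comp (measurable_fst.add measurable_snd)).aestronglyMeasurable
  calc ∫ ω, (W ω - m) * h (X ω + W ω) ∂P
      = ∫ p, (p.2 - m) * h (p.1 + p.2) ∂(P.map X).prod (gaussianReal m v) :=
        hlaw.integral_comp hmeas
    _ = v * ∫ p, deriv h (p.1 + p.2) ∂(P.map X).prod (gaussianReal m v) := by
        refine integral_sub_smul_prod_gaussianReal (g := fun x w ↦ h (x + w))
          (fun x w ↦ (hh (x + w)).hasDerivAt.comp_const_add x w) ?_ ?_
        · rw [← hlaw.map_eq] at hmeas ⊢
          exact (integrable_map_measure hmeas hlaw.aemeasurable).2 hint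
        · rw [← hlaw.map_eq] at hmeas' ⊢
          exact (integrable_map_measure hmeas' hlaw.aemeasurable).2 hint'
    _ = v * ∫ ω, deriv h (X ω + W ω) ∂P := by rw [← hlaw.integral_comp hmeas', Function.comp_def]

lemma integral_sq_of_hasLaw_gaussianReal {W : Ω → ℝ} {v : ℝ≥0}
    (hW : HasLaw W (gaussianReal 0 v) P) : ∫ ω, W ω ^ 2 ∂P = v := by
  have hmean : P[W] = 0 := by rw [hW.integral_eq, integral_id_gaussianReal]
  rw [← variance_of_integral_eq_zero hW.aemeasurable hmean, hW.variance_eq,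
    variance_id_gaussianReal]

lemma integral_add_sq {U V : Ω → ℝ} (hU : MemLp U 2 P) (hV : MemLp V 2 P) :
    ∫ ω, (U ω + V ω) ^ 2 ∂P
      = ∫ ω, U ω ^ 2 ∂P + 2 * ∫ ω, U ω * V ω ∂P + ∫ ω, V ω ^ 2 ∂P := by
  have hUV : Integrable (fun ω ↦ 2 * (U ω * V ω)) P := (hU.integrable_mul hV).const_mul 2
  have hU_add : Integrable (fun ω ↦ U ω ^ 2 + 2 * (U ω * V ω)) P := hU.integrable_sq.add hUV
  simp only [add_sq, mul_assoc]
  rw [integral_add hU_add hV.integrable_sq,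
    integral_add hU.integrable_sq hUV, integral_const_mul]

theorem sure_identity_general {X W : Ω → ℝ} {v : ℝ≥0} (hX : AEMeasurable X P)
    (hW : HasLaw W (gaussianReal 0 v) P) (hXW : IndepFun X W P) {h : ℝ → ℝ}
    (hh : Differentiable ℝ h) (hsq : Integrable (fun ω ↦ h (X ω + W ω) ^ 2) P)
    (hderiv : Integrable (fun ω ↦ deriv h (X ω + W ω)) P) :
    ∫ ω, (X ω + W ω + h (X ω + W ω) - X ω) ^ 2 ∂P
      = v + ∫ ω, (h (X ω + W ω) ^ 2 + 2 * v * deriv h (X ω + W ω)) ∂P := by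
  have hW_L2 : MemLp W 2 P := hW.hasGaussianLaw.memLp_two
  have hh_L2 : MemLp (fun ω ↦ h (X ω + W ω)) 2 P :=
    (memLp_two_iff_integrable_sq
      (hh.continuous.comp_aestronglyMeasurable (hX.add hW.aemeasurable).aestronglyMeasurable)).2 hsq
  have hWh : Integrable (fun ω ↦ W ω * h (X ω + W ω)) P := hW_L2.integrable_mul hh_L2
  have hstein : ∫ ω, W ω * h (X ω + W ω) ∂P = v * ∫ ω, deriv h (X ω + W ω) ∂P := by
    simpa only [sub_zero] using integral_sub_mul_comp_add_of_indepFun hX hW hXW hh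
      (by simpa only [sub_zero] using hWh) hderiv
  calc ∫ ω, (X ω + W ω + h (X ω + W ω) - X ω) ^ 2 ∂P
      = ∫ ω, (W ω + h (X ω + W ω)) ^ 2 ∂P := by simp only [add_assoc, add_sub_cancel_left]
    _ = v + 2 * (v * ∫ ω, deriv h (X ω + W ω) ∂P) + ∫ ω, h (X ω + W ω) ^ 2 ∂P := by
        rw [integral_add_sq hW_L2 hh_L2, integral_sq_of_hasLaw_gaussianReal hW, hstein]
    _ = v + ∫ ω, (h (X ω + W ω) ^ 2 + 2 * v * deriv h (X ω + W ω)) ∂P := by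
        rw [integral_add hsq (hderiv.const_mul _), integral_const_mul]
        ring

end GaussianNoise

/-- **Stein's unbiased risk estimate (SURE) identity.**
For `Y = X + σ Z` with `Z` standard Gaussian independent of `X`, and a continuously
differentiable denoising function `h` with `E[h(Y)²] < ∞`, `E[|h'(Y)|] < ∞` and Gaussian
decay at infinity, one has `E[(Y + h(Y) − X)²] = σ² + E[h(Y)² + 2σ² h'(Y)]`. -/
theorem sure_identity
    {Ω : Type*} [MeasureSpace Ω] [IsProbabilityMeasure (ℙ : Measure Ω)]
    (X Z : Ω → ℝ) (hXm : Measurable X) (hZm : Measurable Z)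
    (hZlaw : Measure.map Z ℙ = gaussianReal 0 1)
    (hXZ : IndepFun X Z ℙ)
    (σ : ℝ) (hσ : 0 < σ)
    (Y : Ω → ℝ) (hY : ∀ ω, Y ω = X ω + σ * Z ω)
    (h : ℝ → ℝ) (hC1 : ContDiff ℝ 1 h)
    (hint1 : Integrable (fun ω => h (Y ω) ^ 2) ℙ)
    (hint2 : Integrable (fun ω => |deriv h (Y ω)|) ℙ)
    (hdecay : ∀ x : ℝ,
      Tendsto (fun z : ℝ => h (x + σ * z) * Real.exp (-z ^ 2 / 2)) (cocompact ℝ) (nhds 0)) :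
    ∫ ω, (Y ω + h (Y ω) - X ω) ^ 2 ∂ℙ
      = σ ^ 2 + ∫ ω, (h (Y ω) ^ 2 + 2 * σ ^ 2 * deriv h (Y ω)) ∂ℙ := by
  obtain rfl : Y = fun ω ↦ X ω + σ * Z ω := funext hY
  have hW : HasLaw (fun ω ↦ σ * Z ω) (gaussianReal 0 (.mk (σ ^ 2) (sq_nonneg σ))) ℙ := by
    simpa using gaussianReal_const_mul ⟨hZm.aemeasurable, hZlaw⟩ σ
  have hXW : IndepFun X (fun ω ↦ σ * Z ω) ℙ := hXZ.comp measurable_id (measurable_const_mul σ)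
  have hderiv : Integrable (fun ω ↦ deriv h (X ω + σ * Z ω)) ℙ :=
    (integrable_norm_iff (by fun_prop)).1 hint2
  exact sure_identity_general hXm.aemeasurable hW hXW (hC1.differentiable one_ne_zero) hint1 hderiv
end

section
/- Consider the additive Gaussian model Y = X + σZ with η = σ²/2, and let F, G be the cumulative distribution functions of X and Y respectively. Assume F is infinitely differentiable and, for the given y ∈ ℝ, the series Σ_{l≥0} (σ^{2l} E[Z^{2l}]/(2l)!) |F^{(2l)}(y)| converges and the Taylor series of F at y converges to F on all of ℝ (justifying term-by-term integration against the Gaussian density). Then G(y) = Σ_{k=0}^∞ (η^k / k!) · F^{(2k)}(y). -/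
open MeasureTheory ProbabilityTheory Filter

/-!
The law of `Y = X + σZ` is the convolution of the law of `X` with `N(0, σ²)`, so `G(y)` is the mean
of `F` under `N(y, σ²)`. Expand `F` around the centre `y` of this law: by symmetry the odd Taylor
terms average to zero, so `F` may be replaced by its even part before integrating. This matters,
because the summability assumption only controls the even terms. It allows termwise integration,
and the moments `E[(σZ)^{2k}] = (2k)!/k! · (σ²/2)^k` turn the even Taylor coefficients into the
terms of the series.
-/

open scoped Nat NNReal

section SymmetricMeasure

variable {E : Type*}

lemma hasSum_even_smul_of_hasSum_neg {𝕜 : Type*} [DivisionRing 𝕜] [NeZero (2 : 𝕜)]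
    [AddCommGroup E] [Module 𝕜 E] [TopologicalSpace E] [ContinuousAdd E] [ContinuousConstSMul 𝕜 E]
    {a : ℕ → E} {t : 𝕜} {x y : E} (hpos : HasSum (fun j ↦ t ^ j • a j) x)
    (hneg : HasSum (fun j ↦ (-t) ^ j • a j) y) :
    HasSum (fun l ↦ t ^ (2 * l) • a (2 * l)) ((2⁻¹ : 𝕜) • (x + y)) := by
  have hsum := (hpos.add hneg).const_smul (2⁻¹ : 𝕜)
  rw [← (mul_right_injective₀ (two_ne_zero' ℕ)).hasSum_iff] at hsum
  · refine hsum.congr_fun fun l ↦ ?_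
    simp [(even_two_mul l).neg_pow, ← two_smul 𝕜, smul_smul, two_ne_zero]
  · intro j hj
    have hodd : Odd j := by
      simpa [← Nat.not_even_iff_odd, even_iff_two_dvd, dvd_iff_exists_eq_mul_right,
        eq_comm] using hj
    simp [hodd.neg_pow]

variable [NormedAddCommGroup E] [NormedSpace ℝ E]

lemma integral_half_smul_add_comp_neg {H : Type*} [AddGroup H] [MeasurableSpace H]
    [MeasurableNeg H] {μ : Measure H} [μ.IsNegInvariant] {f : H → E} (hf : Integrable f μ) :
    ∫ t, (2⁻¹ : ℝ) • (f t + f (-t)) ∂μ = ∫ t, f t ∂μ := by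
  rw [integral_smul, integral_add hf hf.comp_neg, integral_neg_eq_self, ← two_smul ℝ,
    inv_smul_smul₀ two_ne_zero]

theorem hasSum_integral_even_moments [CompleteSpace E] {μ : Measure ℝ} [μ.IsNegInvariant]
    {f : ℝ → E} {a : ℕ → E} (hf : Integrable f μ)
    (hfa : ∀ t, HasSum (fun j ↦ t ^ j • a j) (f t))
    (hμ : ∀ l, Integrable (fun t : ℝ ↦ t ^ (2 * l)) μ)
    (hsum : Summable fun l ↦ (∫ t, t ^ (2 * l) ∂μ) * ‖a (2 * l)‖) :
    HasSum (fun l ↦ (∫ t, t ^ (2 * l) ∂μ) • a (2 * l)) (∫ t, f t ∂μ) := by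
  have hnorm (l : ℕ) :
      ∫ t, ‖t ^ (2 * l) • a (2 * l)‖ ∂μ = (∫ t, t ^ (2 * l) ∂μ) * ‖a (2 * l)‖ := by
    simp only [norm_smul, norm_pow, Real.norm_eq_abs, (even_two_mul l).pow_abs, integral_mul_const]
  have heven (t : ℝ) : ∑' l, t ^ (2 * l) • a (2 * l) = (2⁻¹ : ℝ) • (f t + f (-t)) :=
    (hasSum_even_smul_of_hasSum_neg (hfa t) (hfa (-t))).tsum_eq
  have hterm := hasSum_integral_of_summable_integral_norm
    (fun l ↦ (hμ l).smul_const (a (2 * l))) (by simpa only [hnorm] using hsum)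
  simpa only [heven, integral_half_smul_add_comp_neg hf, integral_smul_const] using hterm

end SymmetricMeasure

section GaussianMoments

lemma gamma_natCast_add_half_eq_factorial_div (l : ℕ) :
    Real.Gamma (l + 1 / 2) = (2 * l)! / (4 ^ l * l !) * √Real.pi := by
  have hdup := Real.Gamma_mul_Gamma_add_half (l + 1 / 2 : ℝ)
  have htwice : 2 * (l + 1 / 2 : ℝ) = (2 * l : ℕ) + 1 := by
    push_cast
    ring
  have hpow : (2 : ℝ) ^ (1 - ((2 * l : ℕ) + 1) : ℝ) = (4 ^ l)⁻¹ := by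
    rw [sub_add_cancel_right, Real.rpow_neg zero_le_two, Real.rpow_natCast, pow_mul]
    norm_num
  rw [add_assoc, add_halves, htwice, hpow, Real.Gamma_nat_eq_factorial,
    Real.Gamma_nat_eq_factorial] at hdup
  field_simp at hdup ⊢
  linarith

lemma integral_pow_two_mul_mul_exp_neg_mul_sq (l : ℕ) {b : ℝ} (hb : 0 < b) :
    ∫ x : ℝ, x ^ (2 * l) * Real.exp (-b * x ^ 2) =
      b ^ (-(l + 1 / 2 : ℝ)) * Real.Gamma (l + 1 / 2) := by
  have habs (x : ℝ) : x ^ (2 * l) * Real.exp (-b * x ^ 2) =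
      |x| ^ ((2 * l : ℕ) : ℝ) * Real.exp (-b * |x| ^ (2 : ℝ)) := by
    rw [Real.rpow_natCast, (even_two_mul l).pow_abs, Real.rpow_two, sq_abs]
  simp_rw [habs]
  rw [integral_comp_abs (f := fun x : ℝ ↦ x ^ ((2 * l : ℕ) : ℝ) * Real.exp (-b * x ^ (2 : ℝ))),
    integral_rpow_mul_exp_neg_mul_rpow two_pos (by linarith [(2 * l).cast_nonneg (α := ℝ)]) hb,
    neg_div, show (((2 * l : ℕ) : ℝ) + 1) / 2 = l + 1 / 2 by push_cast; ring]
  ring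

theorem integral_pow_two_mul_gaussianReal (v : ℝ≥0) (l : ℕ) :
    ∫ x, x ^ (2 * l) ∂gaussianReal 0 v = (2 * l)! / l ! * (v / 2 : ℝ) ^ l := by
  rcases eq_or_ne v 0 with rfl | hv
  · rcases eq_or_ne l 0 with rfl | hl <;> simp [*]
  have hpdf (x : ℝ) : gaussianPDFReal 0 v x • x ^ (2 * l) =
      (√(2 * Real.pi * v))⁻¹ * (x ^ (2 * l) * Real.exp (-(2 * v : ℝ)⁻¹ * x ^ 2)) := by
    rw [gaussianPDFReal, smul_eq_mul, sub_zero, neg_div, div_eq_inv_mul, ← neg_mul]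
    ring
  have hpow : ((2 * v : ℝ)⁻¹) ^ (-(l + 1 / 2 : ℝ)) = (2 * v) ^ l * √(2 * v) := by
    rw [Real.rpow_neg (by positivity), Real.inv_rpow (by positivity), inv_inv,
      Real.rpow_add (by positivity), Real.rpow_natCast, Real.sqrt_eq_rpow]
  have hsqrt : √(2 * Real.pi * v) = √(2 * v) * √Real.pi := by
    rw [← Real.sqrt_mul (by positivity)]
    congr 1
    ring
  simp_rw [integral_gaussianReal_eq_integral_smul hv, hpdf]
  rw [integral_const_mul, integral_pow_two_mul_mul_exp_neg_mul_sq l (by positivity), hpow,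
    gamma_natCast_add_half_eq_factorial_div, hsqrt, show (4 : ℝ) = 2 * 2 by norm_num]
  simp only [mul_pow, div_pow]
  field_simp

lemma integrable_pow_gaussianReal (m : ℝ) (v : ℝ≥0) (n : ℕ) :
    Integrable (fun x : ℝ ↦ x ^ n) (gaussianReal m v) := by
  refine (integrable_norm_iff (by fun_prop)).1 ?_
  simpa using (memLp_id_gaussianReal (μ := m) (v := v) n).integrable_norm_pow'

instance isNegInvariant_gaussianReal (v : ℝ≥0) : (gaussianReal 0 v).IsNegInvariant where
  neg_eq_self := by
    rw [Measure.neg_def]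
    simpa using gaussianReal_map_neg (μ := 0) (v := v)

end GaussianMoments

theorem hasSum_taylor_integral_gaussianReal {E : Type*} [NormedAddCommGroup E] [NormedSpace ℝ E]
    [CompleteSpace E] {f : ℝ → E} {m : ℝ} {v : ℝ≥0} (hf : Integrable f (gaussianReal m v))
    (htaylor : ∀ x, HasSum (fun j ↦ ((x - m) ^ j / j !) • iteratedDeriv j f m) (f x))
    (hsum : Summable fun k ↦ (v / 2 : ℝ) ^ k / k ! * ‖iteratedDeriv (2 * k) f m‖) :
    HasSum (fun k ↦ ((v / 2 : ℝ) ^ k / k !) • iteratedDeriv (2 * k) f m)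
      (∫ x, f x ∂gaussianReal m v) := by
  have hshift : gaussianReal m v = (gaussianReal 0 v).map (m + ·) := by
    rw [gaussianReal_map_const_add, zero_add]
  have hmoment (k : ℕ) :
      (∫ t, t ^ (2 * k) ∂gaussianReal 0 v) * ((2 * k)! : ℝ)⁻¹ = (v / 2 : ℝ) ^ k / k ! := by
    rw [integral_pow_two_mul_gaussianReal]
    field_simp
  have hemb : MeasurableEmbedding (m + · : ℝ → ℝ) := measurableEmbedding_addLeft m
  rw [hshift, hemb.integrable_map_iff] at hf
  rw [hshift, hemb.integral_map]
  have hseries := hasSum_integral_even_moments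
    (a := fun j ↦ (j ! : ℝ)⁻¹ • iteratedDeriv j f m) hf
    (fun t ↦ by simpa [smul_smul, div_eq_mul_inv] using htaylor (m + t))
    (fun l ↦ integrable_pow_gaussianReal 0 v (2 * l))
    (by simpa only [norm_smul, norm_inv, Real.norm_natCast, ← mul_assoc, hmoment] using hsum)
  simpa only [smul_smul, hmoment] using! hseries

section Cdf

lemma integrable_cdf (μ ν : Measure ℝ) [IsFiniteMeasure ν] : Integrable (cdf μ) ν :=
  .of_bound (monotone_cdf μ).measurable.aestronglyMeasurable 1 <| ae_of_all _ fun x ↦ by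
    rw [Real.norm_of_nonneg (cdf_nonneg μ x)]
    exact cdf_le_one μ x

lemma cdf_conv_apply (μ ν : Measure ℝ) [IsProbabilityMeasure μ] [IsProbabilityMeasure ν] (y : ℝ) :
    cdf (μ ∗ ν) y = ∫ w, cdf μ (y - w) ∂ν := by
  have hslice (w : ℝ) : ∫ x, (Set.Iic y).indicator 1 (w + x) ∂μ = cdf μ (y - w) := by
    have hpre : (fun x ↦ (Set.Iic y).indicator (1 : ℝ → ℝ) (w + x)) =
        (Set.Iic (y - w)).indicator 1 := by
      ext x
      simp [Set.indicator_apply, le_sub_iff_add_le']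
    rw [hpre, integral_indicator_one measurableSet_Iic, cdf_eq_real]
  rw [cdf_eq_real, ← integral_indicator_one measurableSet_Iic, Measure.conv_comm, integral_conv]
  · simp_rw [hslice]
  · exact (integrable_const 1).indicator measurableSet_Iic

theorem hasSum_taylor_cdf_conv_gaussianReal {μ : Measure ℝ} [IsProbabilityMeasure μ]
    {v : ℝ≥0} {y : ℝ}
    (htaylor : ∀ x, HasSum (fun j ↦ iteratedDeriv j (cdf μ) y / j ! * (x - y) ^ j) (cdf μ x))
    (hsum : Summable fun k ↦ (v / 2 : ℝ) ^ k / k ! * |iteratedDeriv (2 * k) (cdf μ) y|) :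
    HasSum (fun k ↦ (v / 2 : ℝ) ^ k / k ! * iteratedDeriv (2 * k) (cdf μ) y)
      (cdf (μ ∗ gaussianReal 0 v) y) := by
  have hmean : cdf (μ ∗ gaussianReal 0 v) y = ∫ x, cdf μ x ∂gaussianReal y v := by
    rw [cdf_conv_apply, ← sub_zero y, ← gaussianReal_map_const_sub, sub_zero,
      integral_map (by fun_prop) (monotone_cdf μ).measurable.aestronglyMeasurable]
  rw [hmean]
  refine hasSum_taylor_integral_gaussianReal (integrable_cdf μ _) (fun x ↦ ?_) hsum
  simpa only [smul_eq_mul, div_mul_comm] using htaylor x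

end Cdf

lemma hasLaw_add_const_mul_gaussianReal {Ω : Type*} {_ : MeasurableSpace Ω} {P : Measure Ω}
    {X Z : Ω → ℝ} {μ : Measure ℝ} [SigmaFinite μ] {v : ℝ≥0} (hX : HasLaw X μ P)
    (hZ : HasLaw Z (gaussianReal 0 v) P) (hXZ : IndepFun X Z P) (c : ℝ) :
    HasLaw (fun ω ↦ X ω + c * Z ω) (μ ∗ gaussianReal 0 (.mk (c ^ 2) (sq_nonneg c) * v)) P := by
  have hcZ := gaussianReal_const_mul hZ c
  rw [mul_zero] at hcZ
  exact (hXZ.comp measurable_id (measurable_const_mul c)).hasLaw_fun_add hX hcZ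

/-- **G-in-F series expansion.**
In the additive Gaussian model `Y = X + σZ` with `η = σ²/2` and cdfs `F, G` of `X, Y`:
if `F` is infinitely differentiable, the series
`Σ_l (σ^{2l} E[Z^{2l}]/(2l)!)|F^{(2l)}(y)|` converges, and the Taylor series of `F` at `y`
converges to `F` on all of `ℝ`, then `G(y) = Σ_{k≥0} (η^k/k!) F^{(2k)}(y)`. -/
theorem G_series_in_F
    {Ω : Type*} [MeasureSpace Ω] [IsProbabilityMeasure (ℙ : Measure Ω)]
    (X Z : Ω → ℝ) (hXm : Measurable X) (hZm : Measurable Z)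
    (hZlaw : Measure.map Z ℙ = gaussianReal 0 1)
    (hXZ : IndepFun X Z ℙ)
    (σ : ℝ) (hσ : 0 < σ) (η : ℝ) (hη : η = σ ^ 2 / 2)
    (Y : Ω → ℝ) (hY : ∀ ω, Y ω = X ω + σ * Z ω)
    (F G : ℝ → ℝ)
    (hF : ∀ x, F x = (Measure.map X ℙ (Set.Iic x)).toReal)
    (hG : ∀ x, G x = (Measure.map Y ℙ (Set.Iic x)).toReal)
    (hFsmooth : ContDiff ℝ (⊤ : ℕ∞) F)
    (y : ℝ)
    (hconv : Summable fun l : ℕ =>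
      σ ^ (2 * l) * (∫ ω, Z ω ^ (2 * l) ∂ℙ) / ((2 * l).factorial : ℝ) *
        |iteratedDeriv (2 * l) F y|)
    (htaylor : ∀ x : ℝ,
      HasSum (fun j : ℕ => iteratedDeriv j F y / (j.factorial : ℝ) * (x - y) ^ j) (F x)) :
    HasSum (fun k : ℕ => η ^ k / (k.factorial : ℝ) * iteratedDeriv (2 * k) F y) (G y) := by
  have hX : HasLaw X (.map X ℙ) := ⟨hXm.aemeasurable, rfl⟩
  have hZ : HasLaw Z (gaussianReal 0 1) := ⟨hZm.aemeasurable, hZlaw⟩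
  have := hX.isProbabilityMeasure_iff.1 ‹_›
  let v : ℝ≥0 := .mk (σ ^ 2) (sq_nonneg σ)
  have hηv : η = v / 2 := hη
  have hYlaw : HasLaw Y (.map X ℙ ∗ gaussianReal 0 v) := by
    simpa only [funext hY, mul_one] using hasLaw_add_const_mul_gaussianReal hX hZ hXZ σ
  have hF_cdf : F = cdf (.map X ℙ) := funext fun x ↦ by rw [hF, cdf_eq_real, measureReal_def]
  have hG_cdf : G y = cdf (.map X ℙ ∗ gaussianReal 0 v) y := by
    rw [hG, hYlaw.map_eq, cdf_eq_real, measureReal_def]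
  have hmoment (l : ℕ) : σ ^ (2 * l) * (∫ ω, Z ω ^ (2 * l) ∂ℙ) / (2 * l)! = η ^ l / l ! := by
    have hlaw := hZ.integral_comp (f := (· ^ (2 * l))) (by fun_prop)
    simp only [Function.comp_def, integral_pow_two_mul_gaussianReal] at hlaw
    rw [hlaw, hη, NNReal.coe_one, pow_mul, div_pow, div_pow, one_pow]
    field_simp
  simp only [hmoment, hηv, hF_cdf] at hconv htaylor
  rw [hηv, hF_cdf, hG_cdf]
  exact hasSum_taylor_cdf_conv_gaussianReal htaylor hconv
end

section
/- Consider the additive Gaussian model Y = X + σZ with η = σ²/2, and let F, G be the cumulative distribution functions of X and Y respectively. Assume F is infinitely differentiable and that for the given y ∈ ℝ the double series Σ_{k≥0} Σ_{l≥0} (η^{k+l}/(k! l!)) |F^{(2k+2l)}(y)| converges absolutely (so that G^{(2k)}(y) = Σ_{l≥0} (η^l/l!) F^{(2k+2l)}(y) for every k and rearrangement is justified). Then F(y) = Σ_{k=0}^∞ ((−η)^k / k!) · G^{(2k)}(y). -/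
open MeasureTheory ProbabilityTheory Filter

/-!
Formally, `G = exp (η D²) F` where `D` is differentiation, so `F = exp (-η D²) G`. Only the
exponentials matter: for sequences `a`, `b` with `b k = ∑ l, x ^ l / l! • a (k + l)`, summing
`z ^ k / k! * (x ^ l / l!) • a (k + l)` by rows gives `∑ k, z ^ k / k! • b k`, and by antidiagonals,
through the binomial theorem, `∑ n, (z + x) ^ n / n! • a n`. At `z = -x` only `a 0` survives.
The theorem is the case `a n = F^(2n) (y)`, `b n = G^(2n) (y)`, `x = η`.
-/

open Finset.HasAntidiagonal (antidiagonal)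

theorem hasSum_sum_antidiagonal {A E : Type*} [AddMonoid A] [Finset.HasAntidiagonal A]
    [AddCommMonoid E] [TopologicalSpace E] [ContinuousAdd E] [RegularSpace E]
    {f : A × A → E} {s : E} (hf : HasSum f s) :
    HasSum (fun n ↦ ∑ kl ∈ antidiagonal n, f kl) s :=
  (Finset.HasAntidiagonal.sigmaAntidiagonalEquivProd.hasSum_iff.mpr hf).sigma fun n ↦
    Finset.hasSum (antidiagonal n) f

theorem sum_antidiagonal_pow_div_factorial_mul_pow_div_factorial {K : Type*}
    [DivisionSemiring K] [CharZero K] {z x : K} (hzx : Commute z x) (n : ℕ) :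
    ∑ kl ∈ antidiagonal n, z ^ kl.1 / (kl.1.factorial : K) * (x ^ kl.2 / (kl.2.factorial : K)) =
      (z + x) ^ n / (n.factorial : K) := by
  rw [hzx.add_pow', Finset.sum_div]
  refine Finset.sum_congr rfl fun ⟨k, l⟩ hkl ↦ ?_
  obtain rfl : k + l = n := Finset.HasAntidiagonal.mem_antidiagonal.mp hkl
  have hchoose : ((k + l).choose k : K) ≠ 0 := mod_cast (Nat.choose_pos (k.le_add_right l)).ne'
  have hfactorial : ((k + l).factorial : K) =
      k.factorial * l.factorial * ((k + l).choose k : K) := by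
    rw [← Nat.add_choose_mul_factorial_mul_factorial, Nat.choose_symm_add]
    push_cast
    rw [mul_assoc, (Nat.cast_commute _ _).eq]
  calc z ^ k / (k.factorial : K) * (x ^ l / (l.factorial : K))
      = z ^ k * x ^ l / (k.factorial * l.factorial) :=
        (Nat.cast_commute _ _).div_mul_div_comm (Nat.cast_commute _ _).inv_left₀
    _ = z ^ k * x ^ l * ((k + l).choose k : K) / (k + l).factorial := by
        rw [hfactorial, mul_div_mul_right _ _ hchoose]
    _ = (k + l).choose k • (z ^ k * x ^ l) / (k + l).factorial := by
        rw [nsmul_eq_mul, (Nat.cast_commute _ _).eq]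

theorem hasSum_pow_div_factorial_smul_of_hasSum_add_pow {K E : Type*} [DivisionSemiring K]
    [CharZero K] [AddCommMonoid E] [Module K E] [TopologicalSpace E] [ContinuousAdd E]
    [T3Space E] [ContinuousConstSMul K E] {z x : K} (hzx : Commute z x) {a b : ℕ → E} {s : E}
    (hsum : Summable fun kl : ℕ × ℕ ↦
      (z ^ kl.1 / (kl.1.factorial : K) * (x ^ kl.2 / (kl.2.factorial : K))) • a (kl.1 + kl.2))
    (hb : ∀ k, HasSum (fun l ↦ (x ^ l / (l.factorial : K)) • a (k + l)) (b k))
    (hs : HasSum (fun n ↦ ((z + x) ^ n / (n.factorial : K)) • a n) s) :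
    HasSum (fun k ↦ (z ^ k / (k.factorial : K)) • b k) s := by
  obtain ⟨t, ht⟩ := hsum
  have rows : HasSum (fun k ↦ (z ^ k / (k.factorial : K)) • b k) t :=
    ht.prod_fiberwise fun k ↦ by simpa only [mul_smul] using (hb k).const_smul _
  have antidiagonals : HasSum (fun n ↦ ((z + x) ^ n / (n.factorial : K)) • a n) t := by
    refine (hasSum_sum_antidiagonal ht).congr_fun fun n ↦ ?_
    rw [← sum_antidiagonal_pow_div_factorial_mul_pow_div_factorial hzx, Finset.sum_smul]
    refine Finset.sum_congr rfl fun kl hkl ↦ ?_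
    rw [Finset.HasAntidiagonal.mem_antidiagonal.mp hkl]
  exact antidiagonals.unique hs ▸ rows

theorem F_series_in_G_general {K E : Type*} [DivisionRing K] [CharZero K] [AddCommMonoid E]
    [Module K E] [TopologicalSpace E] [ContinuousAdd E] [T3Space E] [ContinuousConstSMul K E]
    {x : K} {a b : ℕ → E}
    (hsum : Summable fun kl : ℕ × ℕ ↦
      ((-x) ^ kl.1 / (kl.1.factorial : K) * (x ^ kl.2 / (kl.2.factorial : K))) • a (kl.1 + kl.2))
    (hb : ∀ k, HasSum (fun l ↦ (x ^ l / (l.factorial : K)) • a (k + l)) (b k)) :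
    HasSum (fun k ↦ ((-x) ^ k / (k.factorial : K)) • b k) (a 0) := by
  refine hasSum_pow_div_factorial_smul_of_hasSum_add_pow (Commute.refl x).neg_left hsum hb ?_
  convert hasSum_single (f := fun n ↦ ((-x + x) ^ n / (n.factorial : K)) • a n) 0 ?_ using 1
  · simp
  · intro n hn
    simp [hn]

/-- **F-in-G series expansion.**
In the additive Gaussian model `Y = X + σZ` with `η = σ²/2` and cdfs `F, G` of `X, Y`:
if `F` is infinitely differentiable and the double series
`Σ_{k,l} (η^{k+l}/(k! l!)) |F^{(2k+2l)}(y)|` converges absolutely (so that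
`G^{(2k)}(y) = Σ_l (η^l/l!) F^{(2k+2l)}(y)` for every `k` and rearrangement is justified),
then `F(y) = Σ_{k≥0} ((−η)^k/k!) G^{(2k)}(y)`. -/
theorem F_series_in_G
    {Ω : Type*} [MeasureSpace Ω] [IsProbabilityMeasure (ℙ : Measure Ω)]
    (X Z : Ω → ℝ) (hXm : Measurable X) (hZm : Measurable Z)
    (hZlaw : Measure.map Z ℙ = gaussianReal 0 1)
    (hXZ : IndepFun X Z ℙ)
    (σ : ℝ) (hσ : 0 < σ) (η : ℝ) (hη : η = σ ^ 2 / 2)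
    (Y : Ω → ℝ) (hY : ∀ ω, Y ω = X ω + σ * Z ω)
    (F G : ℝ → ℝ)
    (hF : ∀ x, F x = (Measure.map X ℙ (Set.Iic x)).toReal)
    (hG : ∀ x, G x = (Measure.map Y ℙ (Set.Iic x)).toReal)
    (hFsmooth : ContDiff ℝ (⊤ : ℕ∞) F)
    (y : ℝ)
    (hconv : Summable fun kl : ℕ × ℕ =>
      η ^ (kl.1 + kl.2) / ((kl.1.factorial : ℝ) * (kl.2.factorial : ℝ)) *
        |iteratedDeriv (2 * kl.1 + 2 * kl.2) F y|)
    (hGderiv : ∀ k : ℕ,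
      HasSum (fun l : ℕ => η ^ l / (l.factorial : ℝ) * iteratedDeriv (2 * k + 2 * l) F y)
        (iteratedDeriv (2 * k) G y)) :
    HasSum (fun k : ℕ => (-η) ^ k / (k.factorial : ℝ) * iteratedDeriv (2 * k) G y) (F y) := by
  have hη_nonneg : 0 ≤ η := by rw [hη]; positivity
  have hsum : Summable fun kl : ℕ × ℕ ↦ ((-η) ^ kl.1 / (kl.1.factorial : ℝ) *
      (η ^ kl.2 / (kl.2.factorial : ℝ))) • iteratedDeriv (2 * (kl.1 + kl.2)) F y := by
    refine .of_norm (hconv.congr fun kl ↦ ?_)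
    simp [abs_of_nonneg hη_nonneg, pow_add, mul_add, div_mul_div_comm]
  have hGsum (k : ℕ) : HasSum
      (fun l ↦ (η ^ l / (l.factorial : ℝ)) • iteratedDeriv (2 * (k + l)) F y)
      (iteratedDeriv (2 * k) G y) := by
    simpa only [mul_add, smul_eq_mul] using hGderiv k
  simpa only [mul_zero, iteratedDeriv_zero, smul_eq_mul] using
    F_series_in_G_general (a := fun n ↦ iteratedDeriv (2 * n) F y) hsum hGsum
end

section
/- Let (x_k)_{k≥1} be a sequence of real numbers and η ∈ ℝ such that Σ_{k≥1} (η^k/k!) x_k converges absolutely. Then for every integer j ≥ 0, (1/j!) · (Σ_{k=1}^∞ (η^k/k!) x_k)^j = Σ_{n≥j} (η^n/n!) · B_{n,j}(x₁, x₂, …, x_{n−j+1}), where the right-hand side converges absolutely. -/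
/-!
Put `F = ∑_{k ≥ 1} x_k X^k / k!`. Expanding `F ^ j` by the multinomial theorem gives
`B_{n,j}(x₁, …, x_{n−j+1}) = (n! / j!) [X^n] F ^ j` as an identity of formal power series.
Rescaling `F` by `η` turns `η^n / n! * B_{n,j}` into `1 / j!` times the `n`-th coefficient of the
`j`-th power of an absolutely summable series, and by Cauchy products the coefficients of this
power sum absolutely to the `j`-th power of the sum.
-/

open MeasureTheory Filter

/-- The partial Bell polynomial `B_{n,j}(x₁, …, x_{n−j+1})`: the sum over all tuples of
nonnegative integers `(i₁, …, i_{n−j+1})` with `i₁ + ⋯ + i_{n−j+1} = j` and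
`1·i₁ + 2·i₂ + ⋯ + (n−j+1)·i_{n−j+1} = n` of
`n!/(i₁!⋯i_{n−j+1}!) · ∏_m (x_m/m!)^{i_m}`.  (Here `x : ℕ → ℝ` and `x m` is `x_m`.) -/
noncomputable def bellPartial (n j : ℕ) (x : ℕ → ℝ) : ℝ :=
  ∑ i ∈ Finset.filter
      (fun i : Fin (n - j + 1) → ℕ =>
        (∑ m, i m) = j ∧ (∑ m, (m.1 + 1) * i m) = n)
      (Fintype.piFinset fun _ => Finset.range (n + 1)),
    (n.factorial : ℝ) / (∏ m, ((i m).factorial : ℝ)) *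
      ∏ m, (x (m.1 + 1) / ((m.1 + 1).factorial : ℝ)) ^ i m

section PowerSeriesPowers

open Finset PowerSeries

lemma natCast_multinomial {ι K : Type*} [Semifield K] [CharZero K] (s : Finset ι) (i : ι → ℕ) :
    (Nat.multinomial s i : K) =
      ((∑ m ∈ s, i m).factorial : K) / ∏ m ∈ s, ((i m).factorial : K) := by
  have prod_ne_zero : ∏ m ∈ s, ((i m).factorial : K) ≠ 0 :=
    prod_ne_zero_iff.2 fun m _ ↦ Nat.cast_ne_zero.2 (i m).factorial_ne_zero
  rw [eq_div_iff prod_ne_zero, mul_comm]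
  exact_mod_cast Nat.multinomial_spec s i

lemma coeff_sum_monomial_pow {R ι : Type*} [CommSemiring R] [DecidableEq ι] (s : Finset ι)
    (e : ι → ℕ) (a : ι → R) (j d : ℕ) :
    ((∑ m ∈ s, Polynomial.monomial (e m) (a m)) ^ j).coeff d =
      ∑ i ∈ s.piAntidiag j with ∑ m ∈ s, e m * i m = d,
        (Nat.multinomial s i : R) * ∏ m ∈ s, a m ^ i m := by
  have prod_monomial (i : ι → ℕ) : ∏ m ∈ s, Polynomial.monomial (e m) (a m) ^ i m =
      Polynomial.monomial (∑ m ∈ s, e m * i m) (∏ m ∈ s, a m ^ i m) := by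
    simp only [← Polynomial.C_mul_X_pow_eq_monomial, mul_pow, ← pow_mul, prod_mul_distrib,
      prod_pow_eq_pow_sum, map_prod, map_pow]
  simp only [sum_pow_eq_sum_piAntidiag, Polynomial.finsetSum_coeff, sum_filter, prod_monomial,
    Polynomial.coeff_natCast_mul, Polynomial.coeff_monomial, mul_ite, mul_zero]

lemma coeff_pow_eq_coeff_trunc_pow {R : Type*} [CommSemiring R] (f : R⟦X⟧) (j d : ℕ) :
    coeff d (f ^ j) = (trunc (d + 1) f ^ j).coeff d := by
  rw [← Polynomial.coeff_coe, Polynomial.coe_pow,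
    ← coeff_coe_trunc_of_lt (f := f ^ j) d.lt_succ_self,
    ← trunc_trunc_pow, coeff_coe_trunc_of_lt d.lt_succ_self]

lemma coeff_pow_eq_sum_multinomial {R : Type*} [CommSemiring R] (f : R⟦X⟧) (j d : ℕ) :
    coeff d (f ^ j) =
      ∑ i ∈ (univ : Finset (Fin (d + 1))).piAntidiag j with ∑ m, m.1 * i m = d,
        (Nat.multinomial univ i : R) * ∏ m, coeff m.1 f ^ i m := by
  rw [coeff_pow_eq_coeff_trunc_pow, trunc_apply, ← range_eq_Ico, sum_range, coeff_sum_monomial_pow]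

variable {R : Type*} [NormedRing R] {f : R⟦X⟧}

lemma summable_norm_coeff_pow (hf : Summable fun n ↦ ‖coeff n f‖) (j : ℕ) :
    Summable fun n ↦ ‖coeff n (f ^ j)‖ := by
  induction j with
  | zero =>
    refine summable_of_ne_finset_zero (s := {0}) fun n hn ↦ ?_
    rw [pow_zero, coeff_one, if_neg (notMem_singleton.1 hn), norm_zero]
  | succ j ih =>
    simpa only [pow_succ, coeff_mul] using
      summable_norm_sum_mul_antidiagonal_of_summable_norm ih hf

lemma hasSum_coeff_pow [CompleteSpace R] (hf : Summable fun n ↦ ‖coeff n f‖) (j : ℕ) :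
    HasSum (fun n ↦ coeff n (f ^ j)) ((∑' n, coeff n f) ^ j) := by
  suffices h : ∑' n, coeff n (f ^ j) = (∑' n, coeff n f) ^ j from
    h ▸ (summable_norm_coeff_pow hf j).of_norm.hasSum
  induction j with
  | zero => simp [coeff_one]
  | succ j ih =>
    simp only [pow_succ, coeff_mul, ← ih]
    exact (tsum_mul_tsum_eq_tsum_sum_antidiagonal_of_summable_norm
      (summable_norm_coeff_pow hf j) hf).symm

end PowerSeriesPowers

section BellPolynomials

open Finset PowerSeries

/-- The exponential generating series `∑_{k ≥ 1} x_k X^k / k!` of a sequence indexed from `1`, whose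
powers generate the partial Bell polynomials. The value `x 0` does not enter. -/
noncomputable def expGenSeries (x : ℕ → ℝ) : ℝ⟦X⟧ :=
  X * PowerSeries.mk fun k ↦ x (k + 1) / ((k + 1).factorial : ℝ)

lemma coeff_zero_expGenSeries (x : ℕ → ℝ) : coeff 0 (expGenSeries x) = 0 :=
  coeff_zero_X_mul _

lemma coeff_succ_expGenSeries (x : ℕ → ℝ) (k : ℕ) :
    coeff (k + 1) (expGenSeries x) = x (k + 1) / ((k + 1).factorial : ℝ) := by
  rw [expGenSeries, coeff_succ_X_mul, coeff_mk]

lemma bellPartial_eq_zero_of_lt {n j : ℕ} (h : n < j) (x : ℕ → ℝ) : bellPartial n j x = 0 := by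
  refine sum_eq_zero fun i hi ↦ ?_
  obtain ⟨-, hcard, hweight⟩ := mem_filter.1 hi
  simp only [add_one_mul, sum_add_distrib] at hweight
  omega

lemma filter_piFinset_range_eq_filter_piAntidiag (d j : ℕ) :
    {i ∈ Fintype.piFinset fun _ : Fin (d + 1) ↦ range (d + j + 1) |
        ∑ m, i m = j ∧ ∑ m, (m.1 + 1) * i m = d + j} =
      {i ∈ (univ : Finset (Fin (d + 1))).piAntidiag j | ∑ m, m.1 * i m = d} := by
  ext i
  have le_sum (m : Fin (d + 1)) : i m ≤ ∑ m, i m :=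
    single_le_sum_of_canonicallyOrdered (mem_univ m)
  simp only [mem_filter, Fintype.mem_piFinset, mem_range, mem_piAntidiag, add_one_mul,
    sum_add_distrib]
  constructor
  · rintro ⟨-, hcard, hweight⟩
    exact ⟨⟨hcard, fun m _ ↦ mem_univ m⟩, by omega⟩
  · rintro ⟨⟨hcard, -⟩, hweight⟩
    exact ⟨fun m ↦ by linarith [le_sum m], hcard, congrArg₂ (· + ·) hweight hcard⟩

lemma bellPartial_add_eq_coeff_pow (d j : ℕ) (x : ℕ → ℝ) :
    bellPartial (d + j) j x = ((d + j).factorial : ℝ) / (j.factorial : ℝ) *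
      coeff d ((PowerSeries.mk fun k ↦ x (k + 1) / ((k + 1).factorial : ℝ)) ^ j) := by
  rw [bellPartial, Nat.add_sub_cancel, filter_piFinset_range_eq_filter_piAntidiag,
    coeff_pow_eq_sum_multinomial, mul_sum]
  refine sum_congr rfl fun i hi ↦ ?_
  have hcard : ∑ m, i m = j := (mem_piAntidiag.1 (mem_filter.1 hi).1).1
  simp only [natCast_multinomial, hcard, coeff_mk]
  field_simp

lemma bellPartial_eq_coeff_pow (n j : ℕ) (x : ℕ → ℝ) :
    bellPartial n j x = (n.factorial : ℝ) / (j.factorial : ℝ) * coeff n (expGenSeries x ^ j) := by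
  rw [expGenSeries, mul_pow, coeff_X_pow_mul']
  split_ifs with h
  · obtain ⟨d, rfl⟩ := Nat.exists_eq_add_of_le' h
    rw [bellPartial_add_eq_coeff_pow, Nat.add_sub_cancel]
  · rw [bellPartial_eq_zero_of_lt (not_le.1 h), mul_zero]

lemma mul_bellPartial_eq_coeff_pow (η : ℝ) (n j : ℕ) (x : ℕ → ℝ) :
    η ^ n / (n.factorial : ℝ) * bellPartial n j x =
      1 / (j.factorial : ℝ) * coeff n (rescale η (expGenSeries x) ^ j) := by
  rw [bellPartial_eq_coeff_pow, ← map_pow, coeff_rescale]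
  field_simp

end BellPolynomials

/-- **Powers of an exponential-type series are generated by partial Bell polynomials.**
If `Σ_{k≥1} (η^k/k!) x_k` converges absolutely then for every `j ≥ 0`,
`(1/j!) (Σ_{k≥1} (η^k/k!) x_k)^j = Σ_{n≥j} (η^n/n!) B_{n,j}(x₁,…,x_{n−j+1})`,
the right-hand side converging absolutely.  (The summation over all `n : ℕ` coincides with the
summation over `n ≥ j` since `B_{n,j} = 0` for `n < j`.) -/
theorem bell_series_power (x : ℕ → ℝ) (η : ℝ)
    (habs : Summable fun k : ℕ => |η ^ (k + 1) / ((k + 1).factorial : ℝ) * x (k + 1)|)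
    (j : ℕ) :
    HasSum (fun n : ℕ => η ^ n / (n.factorial : ℝ) * bellPartial n j x)
        (1 / (j.factorial : ℝ) *
          (∑' k : ℕ, η ^ (k + 1) / ((k + 1).factorial : ℝ) * x (k + 1)) ^ j)
    ∧ Summable fun n : ℕ => |η ^ n / (n.factorial : ℝ) * bellPartial n j x| := by
  set G : PowerSeries ℝ := PowerSeries.rescale η (expGenSeries x)
  have coeff_succ (k : ℕ) :
      PowerSeries.coeff (k + 1) G = η ^ (k + 1) / ((k + 1).factorial : ℝ) * x (k + 1) := by
    rw [PowerSeries.coeff_rescale, coeff_succ_expGenSeries, mul_div_left_comm, mul_comm]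
  have summable_coeff : Summable fun n ↦ ‖PowerSeries.coeff n G‖ :=
    (summable_nat_add_iff 1).1 <| by simpa only [coeff_succ, Real.norm_eq_abs] using habs
  have tsum_coeff : ∑' n, PowerSeries.coeff n G =
      ∑' k : ℕ, η ^ (k + 1) / ((k + 1).factorial : ℝ) * x (k + 1) := by
    rw [summable_coeff.of_norm.tsum_eq_zero_add, PowerSeries.coeff_rescale, coeff_zero_expGenSeries,
      mul_zero, zero_add, tsum_congr coeff_succ]
  simp only [mul_bellPartial_eq_coeff_pow, abs_mul, ← tsum_coeff]
  exact ⟨(hasSum_coeff_pow summable_coeff j).mul_left _,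
    (summable_norm_coeff_pow summable_coeff j).mul_left _⟩
end

section
/- Let q : ℝ → ℝ be three times continuously differentiable and strictly positive, and write s = q'/q for its score function. Then the second-order denoising function h₂ := −q'''/q + 2·(q''/q)·(q'/q) − (q'/q)³ (the solution of the k = 2 Bell-polynomial recursion with h₁ = q'/q, i.e. h₂ = −G^{(4)}/G^{(1)} + 2 (G^{(3)}/G^{(1)}) h₁ − (G^{(2)}/G^{(1)}) h₁² when G^{(1)} = q) admits the derivative representation h₂(y) = −( (1/2) s(y)² + s'(y) )', i.e. h₂ = −(s s' + s''). Consequently the second-order denoiser satisfies T₂(y) = y + (σ²/2)·(q'(y)/q(y)) − (σ⁴/8)·( (1/2)(q'(y)/q(y))² + (q'(y)/q(y))' )' where T₂(y) = y + η h₁(y) + (η²/2) h₂(y) and η = σ²/2. -/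
open MeasureTheory Filter

/-!
The ratios `rₙ = f⁽ⁿ⁾ / f` satisfy `rₙ' = rₙ₊₁ - rₙ s`, where `s = r₁` is the score. Hence
`s' = r₂ - s²` and `s'' = r₃ - r₂ s - 2 s s'`, so that `s s' + s'' = r₃ - r₂ s - s s'` is the
polynomial `r₃ - 2 r₂ s + s³` in the ratios, that is, `-h₂`.
-/

open scoped Topology

section LogDeriv

variable {𝕜 𝕜' : Type*} [NontriviallyNormedField 𝕜] [NontriviallyNormedField 𝕜']
  [NormedAlgebra 𝕜 𝕜'] {f : 𝕜 → 𝕜'} {x : 𝕜}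

theorem hasDerivAt_iteratedDeriv_div {n : ℕ} (hf : DifferentiableAt 𝕜 f x)
    (hfn : DifferentiableAt 𝕜 (iteratedDeriv n f) x) (hx : f x ≠ 0) :
    HasDerivAt (fun z => iteratedDeriv n f z / f z)
      (iteratedDeriv (n + 1) f x / f x - iteratedDeriv n f x / f x * logDeriv f x) x := by
  refine (hfn.hasDerivAt.fun_div hf.hasDerivAt hx).congr_deriv ?_
  rw [iteratedDeriv_succ, logDeriv_apply]
  field_simp

theorem hasDerivAt_logDeriv (hf : DifferentiableAt 𝕜 f x)
    (hf' : DifferentiableAt 𝕜 (deriv f) x) (hx : f x ≠ 0) :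
    HasDerivAt (logDeriv f) (iteratedDeriv 2 f x / f x - logDeriv f x ^ 2) x := by
  rw [← iteratedDeriv_one] at hf'
  simpa only [iteratedDeriv_one, ← logDeriv_apply, ← sq] using
    hasDerivAt_iteratedDeriv_div hf hf' hx

theorem hasDerivAt_deriv_logDeriv (hf : ∀ᶠ z in 𝓝 x, DifferentiableAt 𝕜 f z)
    (hf' : ∀ᶠ z in 𝓝 x, DifferentiableAt 𝕜 (deriv f) z)
    (hf'' : DifferentiableAt 𝕜 (iteratedDeriv 2 f) x) (hx : f x ≠ 0) :
    HasDerivAt (deriv (logDeriv f))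
      (iteratedDeriv 3 f x / f x - iteratedDeriv 2 f x / f x * logDeriv f x
        - 2 * logDeriv f x * deriv (logDeriv f) x) x := by
  have hne : ∀ᶠ z in 𝓝 x, f z ≠ 0 := hf.self_of_nhds.continuousAt.eventually_ne hx
  have hderiv : deriv (logDeriv f) =ᶠ[𝓝 x]
      fun z => iteratedDeriv 2 f z / f z - logDeriv f z ^ 2 := by
    filter_upwards [hf, hf', hne] with z hz hz' hz0
    exact (hasDerivAt_logDeriv hz hz' hz0).deriv
  have hlog : HasDerivAt (logDeriv f) (deriv (logDeriv f) x) x :=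
    (hasDerivAt_logDeriv hf.self_of_nhds hf'.self_of_nhds hx).differentiableAt.hasDerivAt
  refine HasDerivAt.congr_of_eventuallyEq ?_ hderiv
  simpa using (hasDerivAt_iteratedDeriv_div hf.self_of_nhds hf'' hx).fun_sub (hlog.fun_pow 2)

theorem logDeriv_mul_deriv_logDeriv_add_iteratedDeriv_two
    (hf : ∀ᶠ z in 𝓝 x, DifferentiableAt 𝕜 f z)
    (hf' : ∀ᶠ z in 𝓝 x, DifferentiableAt 𝕜 (deriv f) z)
    (hf'' : DifferentiableAt 𝕜 (iteratedDeriv 2 f) x) (hx : f x ≠ 0) :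
    logDeriv f x * deriv (logDeriv f) x + iteratedDeriv 2 (logDeriv f) x =
      iteratedDeriv 3 f x / f x - 2 * (iteratedDeriv 2 f x / f x) * logDeriv f x
        + logDeriv f x ^ 3 := by
  rw [iteratedDeriv_succ, iteratedDeriv_one, (hasDerivAt_deriv_logDeriv hf hf' hf'' hx).deriv,
    (hasDerivAt_logDeriv hf.self_of_nhds hf'.self_of_nhds hx).deriv]
  ring

theorem deriv_half_sq_add_deriv [NeZero (2 : 𝕜')] (hf : DifferentiableAt 𝕜 f x)
    (hf' : DifferentiableAt 𝕜 (deriv f) x) :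
    deriv (fun z => 1 / 2 * f z ^ 2 + deriv f z) x =
      f x * deriv f x + iteratedDeriv 2 f x := by
  rw [(((hf.hasDerivAt.fun_pow 2).const_mul (1 / 2)).fun_add hf'.hasDerivAt).deriv,
    iteratedDeriv_succ, iteratedDeriv_one]
  have : (2 : 𝕜') ≠ 0 := two_ne_zero
  field_simp
  push_cast
  ring

end LogDeriv

theorem second_order_denoiser_representation_general
    {𝕜 : Type*} [NontriviallyNormedField 𝕜] [NeZero (2 : 𝕜)] (q : 𝕜 → 𝕜) {y : 𝕜}
    (hq : ∀ᶠ z in 𝓝 y, DifferentiableAt 𝕜 q z)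
    (hq' : ∀ᶠ z in 𝓝 y, DifferentiableAt 𝕜 (deriv q) z)
    (hq'' : DifferentiableAt 𝕜 (iteratedDeriv 2 q) y) (hy : q y ≠ 0)
    (s : 𝕜 → 𝕜) (hs : ∀ z, s z = deriv q z / q z)
    (h₂ : 𝕜 → 𝕜)
    (hh₂ : ∀ z, h₂ z = -(iteratedDeriv 3 q z / q z)
        + 2 * (iteratedDeriv 2 q z / q z) * (deriv q z / q z) - (deriv q z / q z) ^ 3)
    (σ η : 𝕜) (hη : η = σ ^ 2 / 2) :
    h₂ y = -deriv (fun t => 1 / 2 * s t ^ 2 + deriv s t) y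
    ∧ h₂ y = -(s y * deriv s y + iteratedDeriv 2 s y)
    ∧ y + η * (deriv q y / q y) + η ^ 2 / 2 * h₂ y
        = y + σ ^ 2 / 2 * (deriv q y / q y)
          - σ ^ 4 / 8 *
            deriv (fun t => 1 / 2 * (deriv q t / q t) ^ 2
              + deriv (fun u => deriv q u / q u) t) y := by
  obtain rfl : s = logDeriv q := funext hs
  have h_score : h₂ y =
      -(logDeriv q y * deriv (logDeriv q) y + iteratedDeriv 2 (logDeriv q) y) := by
    rw [logDeriv_mul_deriv_logDeriv_add_iteratedDeriv_two hq hq' hq'' hy, hh₂, logDeriv_apply]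
    ring
  have h_deriv : h₂ y =
      -deriv (fun t => 1 / 2 * logDeriv q t ^ 2 + deriv (logDeriv q) t) y := by
    rw [h_score, deriv_half_sq_add_deriv
      (hasDerivAt_logDeriv hq.self_of_nhds hq'.self_of_nhds hy).differentiableAt
      (hasDerivAt_deriv_logDeriv hq hq' hq'' hy).differentiableAt]
  have h_coeff : η ^ 2 / 2 = σ ^ 4 / 8 := by
    rw [hη, div_pow, div_div, ← pow_mul]
    norm_num
  refine ⟨h_deriv, h_score, ?_⟩
  simp only [← hs]
  rw [h_coeff, h_deriv, hη]
  ring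

/-- **Derivative representation of the second-order denoising function.**
For a strictly positive `C³` density `q` with score `s = q'/q`, the function
`h₂ = −q'''/q + 2(q''/q)(q'/q) − (q'/q)³` satisfies `h₂ = −((1/2)s² + s')' = −(s s' + s'')`,
and consequently the second-order denoiser `T₂(y) = y + η h₁(y) + (η²/2) h₂(y)` (with
`η = σ²/2`, `h₁ = q'/q`) satisfies
`T₂(y) = y + (σ²/2)(q'/q)(y) − (σ⁴/8)((1/2)(q'/q)² + (q'/q)')'(y)`. -/
theorem second_order_denoiser_representation
    (q : ℝ → ℝ) (hq : ContDiff ℝ 3 q) (hqpos : ∀ y, 0 < q y)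
    (s : ℝ → ℝ) (hs : ∀ y, s y = deriv q y / q y)
    (h₂ : ℝ → ℝ)
    (hh₂ : ∀ y, h₂ y = -(iteratedDeriv 3 q y / q y)
        + 2 * (iteratedDeriv 2 q y / q y) * (deriv q y / q y) - (deriv q y / q y) ^ 3)
    (σ η : ℝ) (hη : η = σ ^ 2 / 2) :
    (∀ y, h₂ y = -deriv (fun t => 1 / 2 * s t ^ 2 + deriv s t) y)
    ∧ (∀ y, h₂ y = -(s y * deriv s y + iteratedDeriv 2 s y))
    ∧ (∀ y, y + η * (deriv q y / q y) + η ^ 2 / 2 * h₂ y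
        = y + σ ^ 2 / 2 * (deriv q y / q y)
          - σ ^ 4 / 8 *
            deriv (fun t => 1 / 2 * (deriv q t / q t) ^ 2
              + deriv (fun u => deriv q u / q u) t) y) := by
  have hq' : Differentiable ℝ (deriv q) := (hq.of_le (by norm_num)).differentiable_deriv_two
  simp only [← forall_and]
  exact fun y => second_order_denoiser_representation_general q
    (.of_forall (hq.differentiable (by norm_num))) (.of_forall hq')
    (hq.differentiable_iteratedDeriv 2 (by norm_num) y) (hqpos y).ne' s hs h₂ hh₂ σ η hη
end
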